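/- Monotonicity in the number of tilted axes: for all d ≥ 1, all α ∈ [0,1) and all k = 0,…,d−1, one has p_L(α,d,k) ≤ p_L(α,d,k+1). -/

import Mathlib

open MeasureTheory Filter ENNReal

/-- Sites of `ℤ^{d+1}`. -/
abbrev Site (d : ℕ) := Fin (d + 1) → ℤ

/-- Site-percolation configurations on `ℤ^{d+1}`: a site is open iff its value is `true`. -/
abbrev Config (d : ℕ) := Site d → Bool

/-- `P` is the i.i.d. Bernoulli(`p`) product measure on `{0,1}^ι`: it is a probability
measure whose cylinder events have the correct product probabilities. -/
def IsBernoulli {ι : Type*} (p : ℝ) (P : Measure (ι → Bool)) : Prop :=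
  IsProbabilityMeasure P ∧
    ∀ (s : Finset ι) (f : ι → Bool),
      P {ω | ∀ x ∈ s, ω x = f x} =
        ∏ x ∈ s, (if f x then ENNReal.ofReal p else ENNReal.ofReal (1 - p))

/-- A function `F : ℤ^d → ℤ` is Lipschitz: `‖x − y‖₁ = 1 → |F x − F y| ≤ 1`. -/
def IsLipschitzFn {d : ℕ} (F : (Fin d → ℤ) → ℤ) : Prop :=
  ∀ x y : Fin d → ℤ, (∑ i, |x i - y i|) = 1 → |F x - F y| ≤ 1

/-- Height `⌊α ∑ᵢ ηᵢ xᵢ⌋` of the tilted plane `L^{α,d}_η` above `x ∈ ℤ^d`. -/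
noncomputable def planeHt (α : ℝ) {d : ℕ} (η x : Fin d → ℤ) : ℤ :=
  ⌊α * ∑ i, (η i : ℝ) * (x i : ℝ)⌋

/-- `η ∈ {-1,0,1}^d`. -/
def IsSign {d : ℕ} (η : Fin d → ℤ) : Prop := ∀ i, η i = -1 ∨ η i = 0 ∨ η i = 1

/-- The event `LIP^{α,d}_η` that there is an open Lipschitz surface lying (strictly) above
the tilted plane `L^{α,d}_η`. -/
def LIP (α : ℝ) {d : ℕ} (η : Fin d → ℤ) : Set (Config d) :=
  {ω | ∃ F : (Fin d → ℤ) → ℤ, IsLipschitzFn F ∧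
    ∀ x : Fin d → ℤ, ω (Fin.snoc x (F x)) = true ∧ planeHt α η x < F x}

/-- `pc` is the critical probability `p_L(α,d,η)` of Lipschitz percolation above the tilted
plane `L^{α,d}_η`: `pc ∈ (0,1)`, for `p` below it there is `P_p`-a.s. no open Lipschitz
surface above the plane, and for `p` above it there `P_p`-a.s. is one.
(Here `P p` is the Bernoulli(`p`) product measure on `{0,1}^{ℤ^{d+1}}`.) -/
def IsCriticalProb {d : ℕ} (P : ℝ → Measure (Config d)) (α : ℝ) (η : Fin d → ℤ)
    (pc : ℝ) : Prop :=
  pc ∈ Set.Ioo (0 : ℝ) 1 ∧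
    (∀ p, 0 ≤ p → p < pc → P p (LIP α η) = 0) ∧
    (∀ p, pc < p → p ≤ 1 → P p (LIP α η) = 1)

/-- The canonical direction vector `η ∈ {-1,0,1}^d` with `k` entries equal to `1`; the
critical probability `p_L(α,d,η)` depends on `η` only through `k = ‖η‖₁`, and
`p_L(α,d,k)` denotes the common value. -/
def etaK (d k : ℕ) : Fin d → ℤ := fun i => if (i : ℕ) < k then 1 else 0

/-- Negation of the `j`-th coordinate of an integer vector. -/
def reflect {n : ℕ} (j : Fin n) (x : Fin n → ℤ) : Fin n → ℤ :=
  fun i => if i = j then -x i else x i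

theorem reflect_involutive {n : ℕ} (j : Fin n) : Function.Involutive (reflect j) := by
  intro x
  funext i
  by_cases h : i = j <;> simp [reflect, h]

theorem abs_reflect_sub_reflect {n : ℕ} (j : Fin n) (x y : Fin n → ℤ) (i : Fin n) :
    |reflect j x i - reflect j y i| = |x i - y i| := by
  by_cases h : i = j
  · simp only [reflect, h, if_true]
    rw [neg_sub_neg, abs_sub_comm]
  · simp [reflect, h]

theorem reflect_castSucc_snoc {d : ℕ} (j : Fin d) (x : Fin d → ℤ) (a : ℤ) :
    reflect j.castSucc (Fin.snoc x a : Site d) = Fin.snoc (reflect j x) a := by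
  funext i
  refine Fin.lastCases ?_ (fun i => ?_) i
  · simp [reflect, (Fin.castSucc_lt_last j).ne']
  · simp [reflect]

theorem IsLipschitzFn.comp_reflect {d : ℕ} {F : (Fin d → ℤ) → ℤ} (hF : IsLipschitzFn F)
    (j : Fin d) : IsLipschitzFn (fun x => F (reflect j x)) := by
  intro x y h
  apply hF
  simpa only [abs_reflect_sub_reflect] using h

theorem IsLipschitzFn.max {d : ℕ} {F G : (Fin d → ℤ) → ℤ} (hF : IsLipschitzFn F)
    (hG : IsLipschitzFn G) : IsLipschitzFn (fun x => max (F x) (G x)) := by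
  intro x y h
  exact (abs_max_sub_max_le_max _ _ _ _).trans (max_le (hF x y h) (hG x y h))

/-- A Lipschitz function stays within `‖x‖₁` of its value at the origin. -/
theorem IsLipschitzFn.abs_sub_zero_le {d : ℕ} {F : (Fin d → ℤ) → ℤ} (hF : IsLipschitzFn F)
    (x : Fin d → ℤ) : |F x - F 0| ≤ ∑ i, |x i| := by
  obtain ⟨n, hn⟩ : ∃ n : ℕ, ∑ i, |x i| = n :=
    Int.eq_ofNat_of_zero_le (Finset.sum_nonneg fun i _ => abs_nonneg _)
  induction n generalizing x with
  | zero =>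
    have hx : x = 0 := by
      funext i
      have := (Finset.sum_eq_zero_iff_of_nonneg (fun i _ => abs_nonneg (x i))).1
        (by simpa using hn) i (Finset.mem_univ i)
      simpa using this
    simp [hx]
  | succ n ih =>
    obtain ⟨j, hj⟩ : ∃ j, x j ≠ 0 := by
      by_contra! h
      simp [h] at hn
      omega
    have hsplit (z : Fin d → ℤ) :
        ∑ i, |z i| = |z j| + ∑ i ∈ Finset.univ.erase j, |z i| :=
      (Finset.add_sum_erase _ _ (Finset.mem_univ j)).symm
    let y := Function.update x j (x j - (x j).sign)
    have hrest : ∀ i ∈ Finset.univ.erase j, y i = x i := fun i hi =>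
      Function.update_of_ne (Finset.ne_of_mem_erase hi) _ _
    have hyj : y j = x j - (x j).sign := Function.update_self ..
    have hy : ∑ i, |y i| = n := by
      rw [hsplit] at hn ⊢
      rw [Finset.sum_congr rfl fun i hi => by rw [hrest i hi], hyj]
      rcases lt_or_gt_of_ne hj with h | h
      · rw [Int.sign_eq_neg_one_of_neg h]
        rw [abs_of_neg h] at hn
        rw [abs_of_nonpos (by omega)]
        push_cast at hn
        linarith
      · rw [Int.sign_eq_one_of_pos h]
        rw [abs_of_pos h] at hn
        rw [abs_of_nonneg (by omega)]
        push_cast at hn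
        linarith
    have hxy : ∑ i, |x i - y i| = 1 := by
      rw [hsplit (fun i => x i - y i), Finset.sum_eq_zero fun i hi => by simp [hrest i hi],
        hyj]
      rcases lt_or_gt_of_ne hj with h | h
      · simp [Int.sign_eq_neg_one_of_neg h]
      · simp [Int.sign_eq_one_of_pos h]
    have h₁ := hF x y hxy
    have h₂ := ih y hy
    rw [hn]
    rw [hy] at h₂
    have h₃ := abs_sub_le (F x) (F y) (F 0)
    push_cast
    linarith

theorem isCompact_lipschitz_fixed_at_zero (d : ℕ) (n : ℤ) :
    IsCompact {F : (Fin d → ℤ) → ℤ | IsLipschitzFn F ∧ F 0 = n} := by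
  have hbox : IsCompact (Set.pi Set.univ fun x : Fin d → ℤ =>
      Set.Icc (n - ∑ i, |x i|) (n + ∑ i, |x i|)) :=
    isCompact_univ_pi fun _ => (Set.finite_Icc _ _).isCompact
  refine hbox.of_isClosed_subset ?_ ?_
  · simp only [IsLipschitzFn, Set.ofPred_and, Set.ofPred_forall]
    refine IsClosed.inter ?_ ?_
    · refine isClosed_iInter fun x => isClosed_iInter fun y => isClosed_iInter fun _ => ?_
      exact isClosed_le (by fun_prop) continuous_const
    · exact isClosed_eq (by fun_prop) continuous_const
  · rintro F ⟨hF, rfl⟩ x -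
    have := abs_le.1 (hF.abs_sub_zero_le x)
    constructor <;> linarith [this.1, this.2]

theorem continuous_eval_surface {d : ℕ} (x : Fin d → ℤ) :
    Continuous fun q : ((Fin d → ℤ) → ℤ) × Config d => q.2 (Fin.snoc x (q.1 x)) := by
  have h : Continuous fun r : ℤ × Config d => r.2 (Fin.snoc x r.1) :=
    continuous_prod_of_discrete_left.2 fun a => by
      change Continuous fun ω : Config d => ω (Fin.snoc x a)
      fun_prop
  exact h.comp (f := fun q : ((Fin d → ℤ) → ℤ) × Config d => (q.1 x, q.2)) (by fun_prop)

/-- `LIP` is a countable union, over the height at the origin, of projections of compact sets. -/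
theorem measurableSet_LIP (α : ℝ) {d : ℕ} (η : Fin d → ℤ) : MeasurableSet (LIP α η) := by
  let C : Set (((Fin d → ℤ) → ℤ) × Config d) :=
    {q | ∀ x, q.2 (Fin.snoc x (q.1 x)) = true ∧ planeHt α η x < q.1 x}
  have hC : IsClosed C := by
    simp only [C, Set.ofPred_forall, Set.ofPred_and]
    refine isClosed_iInter fun x => IsClosed.inter ?_ ?_
    · exact isClosed_eq (continuous_eval_surface x) continuous_const
    · exact isClosed_le (f := fun _ => planeHt α η x + 1) continuous_const (by fun_prop)
  have hLIP : LIP α η = ⋃ n : ℤ, Prod.snd ''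
      (({F : (Fin d → ℤ) → ℤ | IsLipschitzFn F ∧ F 0 = n} ×ˢ (Set.univ : Set (Config d))) ∩ C) := by
    ext ω
    simp only [Set.mem_iUnion, Set.mem_image]
    constructor
    · rintro ⟨F, hF, h⟩
      exact ⟨F 0, (F, ω), ⟨⟨⟨hF, rfl⟩, trivial⟩, h⟩, rfl⟩
    · rintro ⟨n, ⟨F, ω'⟩, ⟨⟨⟨hF, -⟩, -⟩, h⟩, rfl⟩
      exact ⟨F, hF, h⟩
  rw [hLIP]
  refine MeasurableSet.iUnion fun n => IsClosed.measurableSet (IsCompact.isClosed ?_)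
  exact ((((isCompact_lipschitz_fixed_at_zero d n).prod isCompact_univ).inter_right hC).image
    continuous_snd)

/-- Two Bernoulli product measures with the same parameter coincide. -/
theorem IsBernoulli.unique {ι : Type*} {p : ℝ} {P Q : Measure (ι → Bool)}
    (hP : IsBernoulli p P) (hQ : IsBernoulli p Q) : P = Q := by
  classical
  have := hP.1
  have := hQ.1
  refine IsProjectiveLimit.unique (P := fun s => P.map s.restrict) (fun _ => rfl) fun s => ?_
  refine Measure.ext_of_singleton fun f => ?_
  have hpre : s.restrict (π := fun _ : ι => Bool) ⁻¹' {f} =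
      {ω | ∀ x ∈ s, ω x = if h : x ∈ s then f ⟨x, h⟩ else false} := by
    ext ω
    simp only [Set.mem_preimage, Set.mem_singleton_iff, Set.mem_ofPred_eq, funext_iff,
      Subtype.forall, Finset.restrict]
    exact forall₂_congr fun x hx => by rw [dif_pos hx]
  rw [Measure.map_apply (by fun_prop) (measurableSet_singleton f),
    Measure.map_apply (by fun_prop) (measurableSet_singleton f), hpre, hP.2, hQ.2]

/-- A Bernoulli product measure is invariant under permutations of the sites. -/
theorem IsBernoulli.map_comp_equiv {ι : Type*} {p : ℝ} {P : Measure (ι → Bool)}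
    (hP : IsBernoulli p P) (e : ι ≃ ι) : P.map (fun ω x => ω (e x)) = P := by
  have hm : Measurable fun (ω : ι → Bool) x => ω (e x) := by fun_prop
  have := hP.1
  refine IsBernoulli.unique ⟨Measure.isProbabilityMeasure_map hm.aemeasurable, fun s f => ?_⟩ hP
  have hs : MeasurableSet {ω : ι → Bool | ∀ x ∈ s, ω x = f x} := by
    simp only [Set.ofPred_forall]
    exact s.measurableSet_biInter fun x _ =>
      measurableSet_eq_fun (measurable_pi_apply x) measurable_const
  have hpre : (fun (ω : ι → Bool) x => ω (e x)) ⁻¹' {ω | ∀ x ∈ s, ω x = f x} =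
      {ω | ∀ y ∈ s.map e.toEmbedding, ω y = f (e.symm y)} := by
    ext ω
    simp only [Set.mem_preimage, Set.mem_ofPred_eq, Finset.forall_mem_map,
      Equiv.coe_toEmbedding, Equiv.symm_apply_apply]
  rw [Measure.map_apply hm hs, hpre, hP.2, Finset.prod_map]
  simp

theorem sum_etaK_succ {d k : ℕ} (hk : k < d) (x : Fin d → ℤ) :
    ∑ i, (etaK d (k + 1) i : ℝ) * (x i : ℝ) =
      ∑ i, (etaK d k i : ℝ) * (x i : ℝ) + (x ⟨k, hk⟩ : ℝ) := by
  have heta (i : Fin d) :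
      etaK d (k + 1) i = etaK d k i + if i = ⟨k, hk⟩ then 1 else 0 := by
    simp only [etaK, Fin.ext_iff]
    split_ifs <;> omega
  simp [heta, add_mul, Finset.sum_add_distrib]

theorem planeHt_etaK_le_max {d k : ℕ} (hk : k < d) {α : ℝ} (hα : 0 ≤ α) (x : Fin d → ℤ) :
    planeHt α (etaK d k) x ≤ max (planeHt α (etaK d (k + 1)) x)
      (planeHt α (etaK d (k + 1)) (reflect ⟨k, hk⟩ x)) := by
  have hrefl : ∑ i, (etaK d k i : ℝ) * (reflect ⟨k, hk⟩ x i : ℝ) =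
      ∑ i, (etaK d k i : ℝ) * (x i : ℝ) := by
    refine Finset.sum_congr rfl fun i _ => ?_
    by_cases h : i = ⟨k, hk⟩ <;> simp [reflect, etaK, h]
  rcases le_total 0 (x ⟨k, hk⟩) with h | h
  · refine le_max_of_le_left (Int.floor_le_floor (mul_le_mul_of_nonneg_left ?_ hα))
    rw [sum_etaK_succ hk]
    exact le_add_of_nonneg_right (by exact_mod_cast h)
  · refine le_max_of_le_right (Int.floor_le_floor (mul_le_mul_of_nonneg_left ?_ hα))
    rw [sum_etaK_succ hk, hrefl]
    refine le_add_of_nonneg_right ?_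
    simpa [reflect] using h

/-- The maximum of a surface above the plane tilted along `k + 1` axes and one above its mirror
image in the `k`-th axis lies above the plane tilted along `k` axes. -/
theorem mem_LIP_etaK_of_reflect {d k : ℕ} (hk : k < d) {α : ℝ} (hα : 0 ≤ α) {ω : Config d}
    (hω : ω ∈ LIP α (etaK d (k + 1)))
    (hω' : (fun x => ω (reflect (Fin.castSucc ⟨k, hk⟩) x)) ∈ LIP α (etaK d (k + 1))) :
    ω ∈ LIP α (etaK d k) := by
  obtain ⟨F, hF, hFω⟩ := hω
  obtain ⟨G, hG, hGω⟩ := hω'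
  refine ⟨_, hF.max (hG.comp_reflect ⟨k, hk⟩), fun x => ⟨?_, ?_⟩⟩
  · rcases max_choice (F x) (G (reflect ⟨k, hk⟩ x)) with h | h
    · simpa only [h] using (hFω x).1
    · have := (hGω (reflect ⟨k, hk⟩ x)).1
      beta_reduce at this
      rw [reflect_castSucc_snoc, reflect_involutive] at this
      simpa only [h] using this
  · exact (planeHt_etaK_le_max hk hα x).trans_lt
      (max_lt_max (hFω x).2 (hGω (reflect ⟨k, hk⟩ x)).2)

/-- Monotonicity in the number of tilted axes:
`p_L(α,d,k) ≤ p_L(α,d,k+1)` for `k = 0,…,d−1`. -/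
theorem critical_prob_mono_in_tilted_axes
    {d : ℕ} (hd : 1 ≤ d) (α : ℝ) (hα : α ∈ Set.Ico (0 : ℝ) 1) (k : ℕ) (hk : k ≤ d - 1)
    (P : ℝ → Measure (Config d)) (hP : ∀ p ∈ Set.Icc (0 : ℝ) 1, IsBernoulli p (P p))
    (pc pc' : ℝ) (hpc : IsCriticalProb P α (etaK d k) pc)
    (hpc' : IsCriticalProb P α (etaK d (k + 1)) pc') :
    pc ≤ pc' := by
  by_contra! hlt
  have hkd : k < d := by omega
  obtain ⟨p, hp', hp⟩ := exists_between hlt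
  have hp0 : 0 ≤ p := (hpc'.1.1.trans hp').le
  have hp1 : p ≤ 1 := (hp.trans hpc.1.2).le
  have hB := hP p ⟨hp0, hp1⟩
  have := hB.1
  have hmeas := measurableSet_LIP α (etaK d (k + 1))
  have hone : P p (LIP α (etaK d (k + 1))) = 1 := hpc'.2.2 p hp' hp1
  let e : Site d ≃ Site d := (reflect_involutive (Fin.castSucc ⟨k, hkd⟩)).toPerm
  have hR : Measurable fun (ω : Config d) x => ω (e x) := by fun_prop
  have hae : ∀ᵐ ω ∂P p, ω ∈ LIP α (etaK d (k + 1)) := (mem_ae_iff_prob_eq_one hmeas).2 hone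
  have hae' : ∀ᵐ ω ∂P p, (fun x => ω (e x)) ∈ LIP α (etaK d (k + 1)) := by
    refine (mem_ae_iff_prob_eq_one (hR hmeas)).2 ?_
    rw [← Measure.map_apply hR hmeas, hB.map_comp_equiv e, hone]
  have hk_ae : ∀ᵐ ω ∂P p, ω ∈ LIP α (etaK d k) := by
    filter_upwards [hae, hae'] with ω h h'
    exact mem_LIP_etaK_of_reflect hkd hα.1 h h'
  have hk_one : P p (LIP α (etaK d k)) = 1 :=
    (mem_ae_iff_prob_eq_one (measurableSet_LIP α _)).1 hk_ae
  rw [hpc.2.1 p hp0 hp] at hk_one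
  exact zero_ne_one hk_one
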